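/- arXiv:2205.01448 — 2 statements merged into one kernel-verified Lean document; each statement's English description precedes it below -/
import Mathlib

section
/- Let X ~ Hypergeometric(N, K, M), let 0 ≤ ℓ ≤ M be a real number with ℓ < K and M - ℓ < N - K. Put a = ℓ/M, b = K/N, x = M/N. If a ≤ (8/5)·b, (1-a) ≤ 2(1-b), x ≤ 1/4, and M·a·(1-a) ≥ 4, then Pr[X ≥ ℓ] ≥ √(π/320)·e^{-24}·e^{-6·(a-b)²·M/(b·(1-b))}. -/
/-!
Let `μ = MK/N` be the mean, and let `α = M - μ`, `β = K - μ`, `γ = N - M - K + μ` be the expected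
numbers of white balls drawn, black balls left and white balls left, so that `αβ = μγ`. Writing
`p` for the hypergeometric probabilities, the ratio `p (μ + d + 1) / p (μ + d)` equals
`(1 - d/α) (1 - d/β) / ((1 + (d + 1)/μ) (1 + (d + 1)/γ))`.
Multiplying these ratios up to distance `y` loses at most `exp (O(y ^ 2 / s ^ 2))`, where
`s ^ 2 = αμ/M`; near the end of the range, where `1 - d/α` tends to `0`, the loss is controlled by
comparing the product with the integral of the logarithm, which is a Kullback–Leibler function.
By Chebyshev's inequality, the at most `4s + 1` points within distance `2s` of `μ` carry mass at
least `3/4`, and each point is compared with a given `j ≥ μ`; this bounds `p j` from below.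
Replacing `ℓ` by `μ` if it is smaller, one gets the tail by adding up these bounds over the window
`[ℓ, ℓ + s]`. If the window leaves the range, then `s` is itself `O(1 + (ℓ - μ)/s)`, and the single
term at `⌈ℓ⌉` suffices.
-/

open Finset InformationTheory

section KLFun

lemma klFun_add_log_mul_sub_le {w z : ℝ} (hw : 0 ≤ w) (hz : 0 < z) :
    klFun z + Real.log z * (w - z) ≤ klFun w := by
  have hscale : klFun w - (klFun z + Real.log z * (w - z)) = z * klFun (w / z) := by
    simp only [klFun_apply]
    rcases hw.eq_or_lt with rfl | hw
    · simp only [zero_div, zero_mul]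
      ring
    · rw [Real.log_div hw.ne' hz.ne']
      field_simp
      ring
  have := mul_nonneg hz.le (klFun_nonneg (div_nonneg hw hz.le))
  linarith

lemma klFun_le_sub_one_sq {x : ℝ} (hx : 0 ≤ x) : klFun x ≤ (x - 1) ^ 2 := by
  rcases hx.eq_or_lt with rfl | hx
  · simp [klFun_zero]
  · have := mul_le_mul_of_nonneg_left (Real.log_le_sub_one_of_pos hx) hx.le
    rw [klFun_apply]
    linarith

lemma one_sub_div_nonneg {a y : ℝ} (ha : 0 < a) (hy : y ≤ a) : 0 ≤ 1 - y / a := by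
  rw [sub_nonneg]
  exact (div_le_one ha).mpr hy

lemma mul_klFun_one_sub_div_le {a y : ℝ} (ha : 0 < a) (hy : y ≤ a) :
    a * klFun (1 - y / a) ≤ y ^ 2 * (1 / a) :=
  calc a * klFun (1 - y / a) ≤ a * (1 - y / a - 1) ^ 2 := by
        gcongr
        exact klFun_le_sub_one_sq (one_sub_div_nonneg ha hy)
    _ = y ^ 2 * (1 / a) := by field_simp; ring

lemma exp_mul_klFun_sub_le_one_sub_div {a d : ℝ} (ha : 0 < a) (hd : d + 1 ≤ a) :
    Real.exp (a * klFun (1 - d / a) - a * klFun (1 - (d + 1) / a)) ≤ 1 - d / a := by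
  have hz : 0 < 1 - d / a := by
    rw [sub_pos, div_lt_one ha]
    linarith
  rw [← Real.le_log_iff_exp_le hz]
  have htangent := mul_le_mul_of_nonneg_left
    (klFun_add_log_mul_sub_le (one_sub_div_nonneg ha hd) hz) ha.le
  have hstep : a * (Real.log (1 - d / a) * (1 - (d + 1) / a - (1 - d / a)))
      = -Real.log (1 - d / a) := by
    field_simp
    ring
  linarith

end KLFun

section CellPotential

/-- An upper bound for `log (p μ / p (μ + y))`, where `p` are the hypergeometric probabilities with
expected cell counts `α`, `β`, `γ`, `μ` (see `IsExpectedTable`). The two divergence terms account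
for the factors of the ratios that decrease to `0`, the quadratic term for the denominators. -/
noncomputable def cellPotential (α β γ μ y : ℝ) : ℝ :=
  α * klFun (1 - y / α) + β * klFun (1 - y / β) + (y + 1 / 2) ^ 2 / 2 * (1 / μ + 1 / γ)

variable {α β γ μ y d : ℝ}

lemma cellPotential_nonneg (hα : 0 < α) (hβ : 0 < β) (hγ : 0 < γ) (hμ : 0 < μ)
    (hyα : y ≤ α) (hyβ : y ≤ β) : 0 ≤ cellPotential α β γ μ y := by
  have := klFun_nonneg (one_sub_div_nonneg hα hyα)
  have := klFun_nonneg (one_sub_div_nonneg hβ hyβ)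
  unfold cellPotential
  positivity

lemma add_le_mul_exp_div {a : ℝ} (ha : 0 < a) (t : ℝ) : a + t ≤ a * Real.exp (t / a) :=
  calc a + t = a * (t / a + 1) := by field_simp; ring
    _ ≤ a * Real.exp (t / a) := by
        gcongr
        exact Real.add_one_le_exp _

/-- The factors are those of `p (u + 1) / p u` at `u = μ + d`. -/
lemma mul_le_exp_cellPotential_sub_mul (hα : 0 < α) (hβ : 0 < β) (hγ : 0 < γ) (hμ : 0 < μ)
    (hmul : α * β = μ * γ) (hd : 0 ≤ γ + (d + 1)) (hdα : d + 1 ≤ α) (hdβ : d + 1 ≤ β) :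
    (μ + (d + 1)) * (γ + (d + 1)) ≤
      Real.exp (cellPotential α β γ μ (d + 1) - cellPotential α β γ μ d)
        * ((α - d) * (β - d)) := by
  set a := α * klFun (1 - d / α) - α * klFun (1 - (d + 1) / α) with ha
  set b := β * klFun (1 - d / β) - β * klFun (1 - (d + 1) / β) with hb
  have hcell {c : ℝ} (hc : 0 < c) (hdc : d + 1 ≤ c) :
      c * Real.exp (c * klFun (1 - d / c) - c * klFun (1 - (d + 1) / c)) ≤ c - d :=
    calc _ ≤ c * (1 - d / c) := by
          gcongr
          exact exp_mul_klFun_sub_le_one_sub_div hc hdc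
      _ = c - d := by field_simp
  have hexponent : cellPotential α β γ μ (d + 1) - cellPotential α β γ μ d + a + b
      = (d + 1) / μ + (d + 1) / γ := by
    rw [ha, hb]
    unfold cellPotential
    ring
  calc (μ + (d + 1)) * (γ + (d + 1))
      ≤ (μ * Real.exp ((d + 1) / μ)) * (γ * Real.exp ((d + 1) / γ)) := by
        gcongr
        · exact add_le_mul_exp_div hμ _
        · exact add_le_mul_exp_div hγ _
    _ = α * β * Real.exp ((d + 1) / μ + (d + 1) / γ) := by
        rw [Real.exp_add, hmul]
        ring
    _ = Real.exp (cellPotential α β γ μ (d + 1) - cellPotential α β γ μ d)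
          * ((α * Real.exp a) * (β * Real.exp b)) := by
        rw [← hexponent, Real.exp_add, Real.exp_add]
        ring
    _ ≤ _ := by
        gcongr
        · linarith
        · exact hcell hα hdα
        · exact hcell hβ hdβ

lemma cellPotential_le (hα : 0 < α) (hμ : 0 < μ) (hβ : 3 * μ ≤ β) (hγ : 3 * α ≤ γ)
    (hy : 0 ≤ y) (hyα : y ≤ α) (hyβ : y ≤ β) :
    cellPotential α β γ μ y ≤ 7 / 6 * ((y + 1 / 2) ^ 2 * (1 / α + 1 / μ)) := by
  have hαkl := mul_klFun_one_sub_div_le hα hyα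
  have hβkl := mul_klFun_one_sub_div_le (by linarith : 0 < β) hyβ
  have hβinv : 1 / β ≤ 1 / 3 * (1 / μ) :=
    (one_div_le_one_div_of_le (by positivity) hβ).trans_eq (by field_simp)
  have hγinv : 1 / γ ≤ 1 / 3 * (1 / α) :=
    (one_div_le_one_div_of_le (by positivity) hγ).trans_eq (by field_simp)
  have hsq : y ^ 2 ≤ (y + 1 / 2) ^ 2 := by gcongr; linarith
  calc cellPotential α β γ μ y
      ≤ y ^ 2 * (1 / α) + y ^ 2 * (1 / β) + (y + 1 / 2) ^ 2 / 2 * (1 / μ + 1 / γ) := by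
        unfold cellPotential
        gcongr
    _ ≤ (y + 1 / 2) ^ 2 * (1 / α) + (y + 1 / 2) ^ 2 * (1 / 3 * (1 / μ))
          + (y + 1 / 2) ^ 2 / 2 * (1 / μ + 1 / 3 * (1 / α)) := by
        gcongr
        exact one_div_nonneg.mpr (by linarith)
    _ ≤ 7 / 6 * ((y + 1 / 2) ^ 2 * (1 / α + 1 / μ)) := by
        have : 0 ≤ (y + 1 / 2) ^ 2 * (1 / μ) := by positivity
        linarith

end CellPotential

section Chebyshev

lemma sum_sub_sum_mul_sq_div_le_sum_filter {ι : Type*} (S : Finset ι) {p : ι → ℝ}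
    (hp : ∀ i ∈ S, 0 ≤ p i) (f : ι → ℝ) (c : ℝ) {t : ℝ} (ht : 0 < t) :
    ∑ i ∈ S, p i - (∑ i ∈ S, p i * (f i - c) ^ 2) / t ^ 2 ≤ ∑ i ∈ S with |f i - c| < t, p i := by
  rw [sum_div, ← sum_sub_distrib, sum_filter]
  refine sum_le_sum fun i hi ↦ ?_
  have hpi := hp i hi
  split_ifs with hclose
  · have : 0 ≤ p i * (f i - c) ^ 2 / t ^ 2 := by positivity
    linarith
  · have hfar : t ^ 2 ≤ (f i - c) ^ 2 := by
      rw [← sq_abs (f i - c)]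
      exact pow_le_pow_left₀ ht.le (not_lt.mp hclose) 2
    have : p i ≤ p i * (f i - c) ^ 2 / t ^ 2 := by
      rw [le_div_iff₀ (by positivity)]
      gcongr
    linarith

lemma card_filter_abs_sub_lt_le (S : Finset ℕ) (c : ℝ) {t : ℝ} (ht : 0 ≤ t) :
    (#{i ∈ S | |((i : ℕ) : ℝ) - c| < t} : ℝ) ≤ 2 * t + 1 := by
  have hcard : #{i ∈ S | |((i : ℕ) : ℝ) - c| < t} ≤ #(Icc ⌈c - t⌉ ⌊c + t⌋) := by
    refine card_le_card_of_injOn (fun i : ℕ ↦ (i : ℤ)) (fun i hi ↦ ?_)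
      Int.ofNat_injective.injOn
    obtain ⟨hleft, hright⟩ := abs_lt.mp (mem_filter.mp hi).2
    rw [mem_coe, mem_Icc, Int.ceil_le, Int.le_floor]
    push_cast
    constructor <;> linarith
  calc (#{i ∈ S | |((i : ℕ) : ℝ) - c| < t} : ℝ) ≤ ((⌊c + t⌋ + 1 - ⌈c - t⌉).toNat : ℤ) := by
        rw [Int.card_Icc] at hcard
        exact_mod_cast hcard
    _ = max ((⌊c + t⌋ : ℝ) + 1 - ⌈c - t⌉) 0 := by
        rw [Int.toNat_eq_max]
        push_cast
        rfl
    _ ≤ 2 * t + 1 := by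
        refine max_le ?_ (by positivity)
        linarith [Int.floor_le (c + t), Int.le_ceil (c - t)]

end Chebyshev

section Hypergeometric

/-- The probability of exactly `j` black balls in `M` draws without replacement from `N` balls of
which `K` are black. Used for `K ≤ N` and `j ≤ M` only, where the subtractions are exact. -/
noncomputable def hypergeometricProb (N K M j : ℕ) : ℝ :=
  (K.choose j * (N - K).choose (M - j) : ℝ) / N.choose M

variable {N K M : ℕ}

lemma hypergeometricProb_nonneg (j : ℕ) : 0 ≤ hypergeometricProb N K M j := by
  unfold hypergeometricProb
  positivity

lemma sum_hypergeometricProb (hKN : K ≤ N) (hMN : M ≤ N) :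
    ∑ j ∈ range (M + 1), hypergeometricProb N K M j = 1 := by
  have hchoose : (N.choose M : ℝ) ≠ 0 := by exact_mod_cast (Nat.choose_pos hMN).ne'
  have hvandermonde := Nat.add_choose_eq K (N - K) M
  rw [Nat.add_sub_cancel' hKN, Finset.Nat.sum_antidiagonal_eq_sum_range_succ_mk] at hvandermonde
  simp only [hypergeometricProb]
  rw [← sum_div, div_eq_one_iff_eq hchoose, hvandermonde]
  push_cast
  rfl

lemma cast_choose_succ_mul (n k : ℕ) :
    (n.choose (k + 1) : ℝ) * (k + 1) = n.choose k * (n - k) := by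
  rcases le_or_gt k n with hk | hk
  · rw [← Nat.cast_sub hk]
    exact_mod_cast Nat.choose_succ_right_eq n k
  · simp [Nat.choose_eq_zero_of_lt hk, Nat.choose_eq_zero_of_lt (Nat.lt_succ_of_lt hk)]

lemma hypergeometricProb_succ_mul (hKN : K ≤ N) {j : ℕ} (hj : j < M) :
    hypergeometricProb N K M (j + 1) * ((j + 1) * (N - K - M + (j + 1)))
      = hypergeometricProb N K M j * ((K - j) * (M - j)) := by
  obtain ⟨i, rfl⟩ : ∃ i, M = j + 1 + i := Nat.exists_eq_add_of_le hj
  have hblack := cast_choose_succ_mul K j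
  have hwhite := cast_choose_succ_mul (N - K) i
  rw [Nat.cast_sub hKN] at hwhite
  have hi : j + 1 + i - (j + 1) = i := by lia
  have hi_succ : j + 1 + i - j = i + 1 := by lia
  simp only [hypergeometricProb, hi, hi_succ, div_mul_eq_mul_div]
  push_cast
  congr 1
  linear_combination ((N - K).choose i * (N - K - i) : ℝ) * hblack
    - (K.choose j * (K - j) : ℝ) * hwhite

lemma sum_mul_hypergeometricProb_shift (hKN : K ≤ N) (w : ℕ → ℝ) :
    ∑ j ∈ range (M + 1), w j * (hypergeometricProb N K M j * (j * (N - K - M + j)))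
      = ∑ j ∈ range (M + 1),
          w (j + 1) * (hypergeometricProb N K M j * ((K - j) * (M - j))) := by
  rw [sum_range_succ', sum_range_succ]
  simp only [Nat.cast_zero, zero_mul, mul_zero, sub_self, add_zero]
  refine sum_congr rfl fun j hj ↦ ?_
  rw [← hypergeometricProb_succ_mul hKN (mem_range.mp hj)]
  push_cast
  rfl

end Hypergeometric

/-- `α`, `β`, `γ`, `μ` are the expected numbers of white balls drawn, black balls left, white balls
left and black balls drawn, all positive. They are characterised by the marginal totals and by
independence of colour and selection, `mul_eq`. -/
structure IsExpectedTable (N K M : ℕ) (α β γ μ : ℝ) : Prop where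
  white_drawn_pos : 0 < α
  black_left_pos : 0 < β
  white_left_pos : 0 < γ
  mean_pos : 0 < μ
  drawn : α + μ = M
  black : β + μ = K
  total : α + β + γ + μ = N
  mul_eq : α * β = μ * γ

lemma isExpectedTable_mul_div {N K M : ℕ} (hK : 0 < K) (hKN : K < N) (hM : 0 < M) (hMN : M < N) :
    IsExpectedTable N K M (M * (1 - (K : ℝ) / N)) ((N - M) * ((K : ℝ) / N))
      ((N - M) * (1 - (K : ℝ) / N)) (M * ((K : ℝ) / N)) := by
  have hNR : (0 : ℝ) < N := by exact_mod_cast hK.trans hKN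
  have hwhite : 0 < 1 - (K : ℝ) / N := by
    rw [sub_pos, div_lt_one hNR]
    exact_mod_cast hKN
  have hleft : (0 : ℝ) < N - M := sub_pos.mpr (by exact_mod_cast hMN)
  exact
    { white_drawn_pos := by positivity
      black_left_pos := by positivity
      white_left_pos := by positivity
      mean_pos := by positivity
      drawn := by ring
      black := by field_simp; ring
      total := by ring
      mul_eq := by ring }

namespace IsExpectedTable

variable {N K M : ℕ} {α β γ μ : ℝ}

lemma drawn_pos (h : IsExpectedTable N K M α β γ μ) : (0 : ℝ) < M := by
  linarith [h.drawn, h.white_drawn_pos, h.mean_pos]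

lemma total_pos (h : IsExpectedTable N K M α β γ μ) : (0 : ℝ) < N := by
  linarith [h.total, h.drawn, h.drawn_pos, h.black_left_pos, h.white_left_pos]

lemma black_le_total (h : IsExpectedTable N K M α β γ μ) : K ≤ N := by
  have : (K : ℝ) ≤ N := by linarith [h.black, h.total, h.white_drawn_pos, h.white_left_pos]
  exact_mod_cast this

lemma drawn_lt_total (h : IsExpectedTable N K M α β γ μ) : M < N := by
  have : (M : ℝ) < N := by linarith [h.drawn, h.total, h.black_left_pos, h.white_left_pos]
  exact_mod_cast this

lemma sum_prob (h : IsExpectedTable N K M α β γ μ) :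
    ∑ j ∈ range (M + 1), hypergeometricProb N K M j = 1 :=
  sum_hypergeometricProb h.black_le_total h.drawn_lt_total.le

section Variance

lemma detailed_balance_sub (h : IsExpectedTable N K M α β γ μ) (x : ℝ) :
    x * (N - K - M + x) - (K - x) * (M - x) = N * (x - μ) := by
  rw [← h.drawn, ← h.black, ← h.total]
  linear_combination -h.mul_eq

lemma sum_prob_mul_sub_mean (h : IsExpectedTable N K M α β γ μ) :
    ∑ j ∈ range (M + 1), hypergeometricProb N K M j * (j - μ) = 0 := by
  have hshift := sum_mul_hypergeometricProb_shift (M := M) h.black_le_total (fun _ ↦ 1)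
  rw [← sub_eq_zero, ← sum_sub_distrib] at hshift
  refine (mul_eq_zero.mp ?_).resolve_left h.total_pos.ne'
  rw [← hshift, mul_sum]
  refine sum_congr rfl fun j _ ↦ ?_
  linear_combination -hypergeometricProb N K M j * h.detailed_balance_sub j

lemma total_sub_one_mul_variance (h : IsExpectedTable N K M α β γ μ) :
    (N - 1) * ∑ j ∈ range (M + 1), hypergeometricProb N K M j * ((j : ℝ) - μ) ^ 2 = μ * γ := by
  have hshift := sum_mul_hypergeometricProb_shift (M := M) h.black_le_total (fun j ↦ j - μ)
  have hexpand : ∑ j ∈ range (M + 1), ((N - 1) * (hypergeometricProb N K M j * ((j : ℝ) - μ) ^ 2)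
      + (α + β) * (hypergeometricProb N K M j * (j - μ)) - μ * γ * hypergeometricProb N K M j)
      = 0 := by
    rw [← sub_eq_zero, ← sum_sub_distrib] at hshift
    rw [← hshift]
    refine sum_congr rfl fun j _ ↦ ?_
    have hfactor : ((K : ℝ) - j) * (M - j)
        = μ * γ - (α + β) * (j - μ) + ((j : ℝ) - μ) ^ 2 := by
      rw [← h.drawn, ← h.black]
      linear_combination h.mul_eq
    push_cast
    linear_combination hypergeometricProb N K M j * hfactor
      - hypergeometricProb N K M j * (j - μ) * h.detailed_balance_sub j
  rw [sum_sub_distrib, sum_add_distrib, ← mul_sum, ← mul_sum, ← mul_sum,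
    h.sum_prob_mul_sub_mean, h.sum_prob] at hexpand
  linarith

/-- `αμ/M` is the variance when drawing with replacement. -/
lemma variance_le (h : IsExpectedTable N K M α β γ μ) :
    ∑ j ∈ range (M + 1), hypergeometricProb N K M j * ((j : ℝ) - μ) ^ 2 ≤ α * μ / M := by
  have hM : (1 : ℝ) ≤ M := Nat.one_le_cast.mpr (Nat.cast_pos.mp h.drawn_pos)
  have hMN : (M : ℝ) < N := by exact_mod_cast h.drawn_lt_total
  have hvar := h.total_sub_one_mul_variance
  have hγ : μ * γ = α * μ / M * (N - M) := by
    have := h.drawn_pos.ne'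
    field_simp
    rw [← h.drawn, ← h.total]
    linear_combination -μ * h.mul_eq
  have hbinomial : 0 ≤ α * μ / M := by
    have := h.white_drawn_pos
    have := h.mean_pos
    positivity
  refine le_of_mul_le_mul_left ?_ (by linarith : (0 : ℝ) < N - 1)
  calc _ = α * μ / M * (N - M) := hvar.trans hγ
    _ ≤ α * μ / M * (N - 1) := by gcongr
    _ = _ := mul_comm _ _

end Variance

section Comparison

lemma succ_mul_eq (h : IsExpectedTable N K M α β γ μ) {u : ℕ} (hu : u < M) :
    hypergeometricProb N K M (u + 1) * ((μ + (u - μ + 1)) * (γ + (u - μ + 1)))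
      = hypergeometricProb N K M u * ((α - (u - μ)) * (β - (u - μ))) := by
  convert hypergeometricProb_succ_mul h.black_le_total hu using 2
  · rw [← h.drawn, ← h.black, ← h.total]
    ring
  · rw [← h.drawn, ← h.black]
    ring

lemma prob_le_mul_prob_succ (h : IsExpectedTable N K M α β γ μ) {u : ℕ} {c : ℝ}
    (huM : u < M) (huK : u < K)
    (hc : (μ + (u - μ + 1)) * (γ + (u - μ + 1)) ≤ c * ((α - (u - μ)) * (β - (u - μ)))) :
    hypergeometricProb N K M u ≤ c * hypergeometricProb N K M (u + 1) := by
  have huM' : (u : ℝ) < M := by exact_mod_cast huM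
  have huK' : (u : ℝ) < K := by exact_mod_cast huK
  have hpos : 0 < (α - (u - μ)) * (β - (u - μ)) :=
    mul_pos (by linarith [h.drawn]) (by linarith [h.black])
  refine le_of_mul_le_mul_right ?_ hpos
  calc hypergeometricProb N K M u * ((α - (u - μ)) * (β - (u - μ)))
      = hypergeometricProb N K M (u + 1) * ((μ + (u - μ + 1)) * (γ + (u - μ + 1))) :=
        (h.succ_mul_eq huM).symm
    _ ≤ hypergeometricProb N K M (u + 1) * (c * ((α - (u - μ)) * (β - (u - μ)))) :=
        mul_le_mul_of_nonneg_left hc (hypergeometricProb_nonneg _)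
    _ = _ := by ring

lemma prob_le_prob_of_le_mean (h : IsExpectedTable N K M α β γ μ) {i j : ℕ} (hij : i ≤ j)
    (hj : (j : ℝ) ≤ μ) : hypergeometricProb N K M i ≤ hypergeometricProb N K M j := by
  induction j, hij using Nat.le_induction with
  | base => rfl
  | succ u _ ih =>
    push_cast at hj
    refine (ih (by linarith)).trans ?_
    have huM : (u : ℝ) < M := by linarith [h.drawn, h.white_drawn_pos]
    have huK : (u : ℝ) < K := by linarith [h.black, h.black_left_pos]
    rw [← one_mul (hypergeometricProb N K M (u + 1))]
    refine h.prob_le_mul_prob_succ (by exact_mod_cast huM) (by exact_mod_cast huK) ?_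
    have hα := h.white_drawn_pos
    have hβ := h.black_left_pos
    have hγ := h.white_left_pos
    calc (μ + (u - μ + 1)) * (γ + (u - μ + 1)) ≤ (μ + (u - μ + 1)) * γ :=
          mul_le_mul_of_nonneg_left (by linarith) (by ring_nf; positivity)
      _ ≤ μ * γ := by gcongr; linarith
      _ = α * β := h.mul_eq.symm
      _ ≤ (α - (u - μ)) * (β - (u - μ)) := by gcongr <;> linarith
      _ = _ := (one_mul _).symm

lemma prob_le_prob_of_mean_le (h : IsExpectedTable N K M α β γ μ) {i j : ℕ} (hij : i ≤ j)
    (hjM : j ≤ M) (hi : μ ≤ i) : hypergeometricProb N K M j ≤ hypergeometricProb N K M i := by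
  induction j, hij using Nat.le_induction with
  | base => rfl
  | succ u hiu ih =>
    refine le_trans ?_ (ih (by lia))
    have hμu : μ ≤ u := hi.trans (by exact_mod_cast hiu)
    have huM : (u : ℝ) + 1 ≤ M := by exact_mod_cast hjM
    have hβ := h.black_left_pos
    have hγ := h.white_left_pos
    have hμ := h.mean_pos
    have hratio : (α - (u - μ)) * (β - (u - μ)) ≤ (μ + (u - μ + 1)) * (γ + (u - μ + 1)) :=
      calc (α - (u - μ)) * (β - (u - μ)) ≤ (α - (u - μ)) * β :=
            mul_le_mul_of_nonneg_left (by linarith) (by linarith [h.drawn])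
        _ ≤ α * β := by gcongr; linarith
        _ = μ * γ := h.mul_eq
        _ ≤ (μ + (u - μ + 1)) * (γ + (u - μ + 1)) := by gcongr <;> linarith
    have hpos : 0 < (μ + (u - μ + 1)) * (γ + (u - μ + 1)) :=
      mul_pos (by linarith) (by linarith)
    refine le_of_mul_le_mul_right ?_ hpos
    rw [h.succ_mul_eq hjM]
    exact mul_le_mul_of_nonneg_left hratio (hypergeometricProb_nonneg _)

lemma prob_le_exp_sub_mul_prob (h : IsExpectedTable N K M α β γ μ) {i j : ℕ} (hij : i ≤ j)
    (hjM : j ≤ M) (hjK : j ≤ K) (hi : μ - 1 ≤ i) :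
    hypergeometricProb N K M i ≤
      Real.exp (cellPotential α β γ μ (j - μ) - cellPotential α β γ μ (i - μ))
        * hypergeometricProb N K M j := by
  induction j, hij using Nat.le_induction with
  | base => simp
  | succ u hiu ih =>
    have huM : (u : ℝ) + 1 ≤ M := by exact_mod_cast hjM
    have huK : (u : ℝ) + 1 ≤ K := by exact_mod_cast hjK
    have hμu : μ - 1 ≤ u := hi.trans (by exact_mod_cast hiu)
    have hstep := h.prob_le_mul_prob_succ (u := u) hjM hjK <|
      mul_le_exp_cellPotential_sub_mul (d := u - μ) h.white_drawn_pos h.black_left_pos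
        h.white_left_pos h.mean_pos h.mul_eq (by linarith [h.white_left_pos])
        (by linarith [h.drawn]) (by linarith [h.black])
    have hcast : ((u + 1 : ℕ) : ℝ) - μ = u - μ + 1 := by push_cast; ring
    calc hypergeometricProb N K M i ≤ _ := ih (by lia) (by lia)
      _ ≤ _ := mul_le_mul_of_nonneg_left hstep (Real.exp_pos _).le
      _ = _ := by
        rw [← mul_assoc, ← Real.exp_add, hcast]
        ring_nf

lemma prob_le_exp_cellPotential_mul_prob (h : IsExpectedTable N K M α β γ μ) {i j : ℕ}
    (hiM : i ≤ M) (hjM : j ≤ M) (hjK : j ≤ K) (hj : μ ≤ j) :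
    hypergeometricProb N K M i ≤
      Real.exp (cellPotential α β γ μ (j - μ)) * hypergeometricProb N K M j := by
  have hjM' : (j : ℝ) ≤ M := by exact_mod_cast hjM
  have hjK' : (j : ℝ) ≤ K := by exact_mod_cast hjK
  have hpotential_nonneg {y : ℝ} (hy : y ≤ j - μ) : 0 ≤ cellPotential α β γ μ y :=
    cellPotential_nonneg h.white_drawn_pos h.black_left_pos h.white_left_pos h.mean_pos
      (by linarith [h.drawn]) (by linarith [h.black])
  have hbetween {k : ℕ} (hkj : k ≤ j) (hk : μ - 1 ≤ k) : hypergeometricProb N K M k ≤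
      Real.exp (cellPotential α β γ μ (j - μ)) * hypergeometricProb N K M j := by
    refine (h.prob_le_exp_sub_mul_prob hkj hjM hjK hk).trans ?_
    have : (k : ℝ) ≤ j := by exact_mod_cast hkj
    gcongr
    · exact hypergeometricProb_nonneg j
    · linarith [hpotential_nonneg (y := k - μ) (by linarith)]
  rcases le_total j i with hji | hij
  · exact (h.prob_le_prob_of_mean_le hji hiM hj).trans <|
      le_mul_of_one_le_left (hypergeometricProb_nonneg j) <|
        Real.one_le_exp (hpotential_nonneg le_rfl)
  rcases le_or_gt (μ - 1) i with hi | hi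
  · exact hbetween hij hi
  have hfloor_le := Nat.floor_le h.mean_pos.le
  have hlt_floor := Nat.lt_floor_add_one μ
  calc hypergeometricProb N K M i ≤ hypergeometricProb N K M ⌊μ⌋₊ :=
        h.prob_le_prob_of_le_mean (Nat.le_floor (by linarith)) hfloor_le
    _ ≤ _ := hbetween (Nat.cast_le.mp (hfloor_le.trans hj)) (by linarith)

end Comparison

section PointBound

lemma three_quarters_le_mul_prob (h : IsExpectedTable N K M α β γ μ) {s : ℝ} (hs : 0 < s)
    (hsq : s ^ 2 = α * μ / M) {j : ℕ} (hjM : j ≤ M) (hjK : j ≤ K) (hj : μ ≤ j) :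
    3 / 4 ≤ (4 * s + 1) *
      (Real.exp (cellPotential α β γ μ (j - μ)) * hypergeometricProb N K M j) := by
  set W := {i ∈ range (M + 1) | |((i : ℕ) : ℝ) - μ| < 2 * s}
  have hmass : 3 / 4 ≤ ∑ i ∈ W, hypergeometricProb N K M i := by
    have hchebyshev := sum_sub_sum_mul_sq_div_le_sum_filter (range (M + 1))
      (fun i _ ↦ hypergeometricProb_nonneg (N := N) (K := K) (M := M) i)
      (fun i : ℕ ↦ (i : ℝ)) μ (by positivity : 0 < 2 * s)
    have hvar : (∑ i ∈ range (M + 1), hypergeometricProb N K M i * ((i : ℝ) - μ) ^ 2)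
        / (2 * s) ^ 2 ≤ 1 / 4 := by
      rw [div_le_iff₀ (by positivity)]
      linarith [h.variance_le]
    rw [h.sum_prob] at hchebyshev
    linarith
  calc 3 / 4 ≤ ∑ i ∈ W, hypergeometricProb N K M i := hmass
    _ ≤ #W * (Real.exp (cellPotential α β γ μ (j - μ)) * hypergeometricProb N K M j) := by
      rw [← nsmul_eq_mul]
      refine sum_le_card_nsmul _ _ _ fun i hi ↦ ?_
      have hiM := mem_range.mp (mem_filter.mp hi).1
      exact h.prob_le_exp_cellPotential_mul_prob (by lia) hjM hjK hj
    _ ≤ _ := by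
      have := hypergeometricProb_nonneg (N := N) (K := K) (M := M) j
      gcongr
      linarith [card_filter_abs_sub_lt_le (range (M + 1)) μ (by positivity : 0 ≤ 2 * s)]

lemma three_mul_mean_le_black_left (h : IsExpectedTable N K M α β γ μ)
    (hx : 4 * (M : ℝ) ≤ N) : 3 * μ ≤ β := by
  refine le_of_mul_le_mul_left ?_ h.drawn_pos
  have hscaled := mul_le_mul_of_nonneg_left hx h.mean_pos.le
  rw [← h.drawn, ← h.total] at hscaled
  rw [← h.drawn]
  linarith [h.mul_eq]

lemma three_mul_white_drawn_le_white_left (h : IsExpectedTable N K M α β γ μ)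
    (hx : 4 * (M : ℝ) ≤ N) : 3 * α ≤ γ := by
  refine le_of_mul_le_mul_left ?_ h.drawn_pos
  have hscaled := mul_le_mul_of_nonneg_left hx h.white_drawn_pos.le
  rw [← h.drawn, ← h.total] at hscaled
  rw [← h.drawn]
  linarith [h.mul_eq]

lemma one_div_add_one_div (h : IsExpectedTable N K M α β γ μ) :
    1 / α + 1 / μ = 1 / (α * μ / M) := by
  have := h.white_drawn_pos
  have := h.mean_pos
  rw [← h.drawn]
  field_simp
  ring

lemma cellPotential_sub_mean_le (h : IsExpectedTable N K M α β γ μ) (hx : 4 * (M : ℝ) ≤ N)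
    {s r : ℝ} (hs : 1 ≤ s) (hsq : s ^ 2 = α * μ / M) {j : ℕ} (hjM : j ≤ M) (hjK : j ≤ K)
    (hj : μ ≤ j) (hjr : j ≤ r + 1 + s) :
    cellPotential α β γ μ (j - μ) ≤ 7 / 6 * ((r - μ) / s + 5 / 2) ^ 2 := by
  have hjM' : (j : ℝ) ≤ M := by exact_mod_cast hjM
  have hjK' : (j : ℝ) ≤ K := by exact_mod_cast hjK
  have hs_pos : 0 < s := by linarith
  calc cellPotential α β γ μ (j - μ)
      ≤ 7 / 6 * ((j - μ + 1 / 2) ^ 2 * (1 / α + 1 / μ)) :=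
        cellPotential_le h.white_drawn_pos h.mean_pos (h.three_mul_mean_le_black_left hx)
          (h.three_mul_white_drawn_le_white_left hx) (by linarith) (by linarith [h.drawn])
          (by linarith [h.black])
    _ = 7 / 6 * ((j - μ + 1 / 2) / s) ^ 2 := by
        rw [h.one_div_add_one_div, ← hsq, div_pow]
        ring
    _ ≤ 7 / 6 * ((r - μ) / s + 5 / 2) ^ 2 := by
        gcongr
        rw [div_le_iff₀ hs_pos, add_mul, div_mul_cancel₀ _ hs_pos.ne']
        linarith

lemma exp_div_le_prob (h : IsExpectedTable N K M α β γ μ) (hx : 4 * (M : ℝ) ≤ N)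
    {s r : ℝ} (hs : 1 ≤ s) (hsq : s ^ 2 = α * μ / M) {j : ℕ} (hjM : j ≤ M) (hjK : j ≤ K)
    (hj : μ ≤ j) (hjr : j ≤ r + 1 + s) :
    3 / 4 * Real.exp (-(7 / 6 * ((r - μ) / s + 5 / 2) ^ 2)) / (4 * s + 1)
      ≤ hypergeometricProb N K M j := by
  have hp := hypergeometricProb_nonneg (N := N) (K := K) (M := M) j
  have hpotential := h.cellPotential_sub_mean_le hx hs hsq hjM hjK hj hjr
  rw [div_le_iff₀ (by positivity), Real.exp_neg, ← div_eq_mul_inv,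
    div_le_iff₀ (Real.exp_pos _)]
  calc 3 / 4 ≤ _ := h.three_quarters_le_mul_prob (by positivity) hsq hjM hjK hj
    _ ≤ (4 * s + 1) * (Real.exp (7 / 6 * ((r - μ) / s + 5 / 2) ^ 2)
          * hypergeometricProb N K M j) := by gcongr
    _ = _ := by ring

end PointBound

end IsExpectedTable

section Tail

/-- The probability of at least `r` black balls in `M` draws without replacement from `N` balls of
which `K` are black. -/
noncomputable def hypergeometricTail (N K M : ℕ) (r : ℝ) : ℝ :=
  ∑ j ∈ range (M + 1), if r ≤ (j : ℝ) then hypergeometricProb N K M j else 0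

variable {N K M : ℕ}

lemma hypergeometricTail_antitone : Antitone (hypergeometricTail N K M) := by
  intro q r hqr
  refine sum_le_sum fun j _ ↦ ?_
  have := hypergeometricProb_nonneg (N := N) (K := K) (M := M) j
  split_ifs <;> linarith

lemma card_mul_le_hypergeometricTail {r c : ℝ} {L U : ℕ} (hr : r ≤ L) (hU : U ≤ M)
    (hc : ∀ j ∈ Icc L U, c ≤ hypergeometricProb N K M j) :
    #(Icc L U) * c ≤ hypergeometricTail N K M r := by
  have hsubset : Icc L U ⊆ {j ∈ range (M + 1) | r ≤ (j : ℝ)} := by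
    intro j hj
    obtain ⟨hLj, hjU⟩ := mem_Icc.mp hj
    have : (L : ℝ) ≤ j := by exact_mod_cast hLj
    exact mem_filter.mpr ⟨mem_range.mpr (by lia), by linarith⟩
  unfold hypergeometricTail
  rw [← nsmul_eq_mul, ← sum_filter]
  exact (card_nsmul_le_sum _ _ _ hc).trans <|
    sum_le_sum_of_subset_of_nonneg hsubset fun j _ _ ↦ hypergeometricProb_nonneg j

lemma exp_le_mul_exp_div_of_window {s : ℝ} (hs : 1 ≤ s) (τ : ℝ) :
    1 / 10 * Real.exp (-24 + -6 * τ ^ 2)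
      ≤ s * (3 / 4 * Real.exp (-(7 / 6 * (τ + 5 / 2) ^ 2)) / (4 * s + 1)) := by
  have hexponent : -24 + -6 * τ ^ 2 ≤ -(7 / 6 * (τ + 5 / 2) ^ 2) := by
    linarith [sq_nonneg (τ - 1), sq_nonneg τ]
  have hconstant : 1 / 10 ≤ s * (3 / 4) / (4 * s + 1) := by
    rw [le_div_iff₀ (by positivity)]
    linarith
  calc 1 / 10 * Real.exp (-24 + -6 * τ ^ 2)
      ≤ s * (3 / 4) / (4 * s + 1) * Real.exp (-(7 / 6 * (τ + 5 / 2) ^ 2)) := by gcongr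
    _ = _ := by ring

lemma exp_le_exp_div_of_overflow {s τ : ℝ} (hs : 1 ≤ s) (hsτ : s ≤ τ + 2) :
    1 / 10 * Real.exp (-24 + -6 * τ ^ 2)
      ≤ 3 / 4 * Real.exp (-(7 / 6 * (τ + 5 / 2) ^ 2)) / (4 * s + 1) := by
  have hexponent : -24 + -6 * τ ^ 2 ≤ -(τ + 1) + -(7 / 6 * (τ + 5 / 2) ^ 2) := by
    linarith [sq_nonneg (τ - 1)]
  have hconstant : 1 / 10 * Real.exp (-(τ + 1)) ≤ 3 / 4 / (4 * s + 1) := by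
    rw [Real.exp_neg, ← div_eq_mul_inv, div_le_div_iff₀ (Real.exp_pos _) (by positivity)]
    linarith [Real.add_one_le_exp (τ + 1)]
  calc 1 / 10 * Real.exp (-24 + -6 * τ ^ 2)
      ≤ 1 / 10 * Real.exp (-(τ + 1) + -(7 / 6 * (τ + 5 / 2) ^ 2)) := by gcongr
    _ = 1 / 10 * Real.exp (-(τ + 1)) * Real.exp (-(7 / 6 * (τ + 5 / 2) ^ 2)) := by
        rw [Real.exp_add]
        ring
    _ ≤ 3 / 4 / (4 * s + 1) * Real.exp (-(7 / 6 * (τ + 5 / 2) ^ 2)) := by gcongr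
    _ = _ := by ring

end Tail

namespace IsExpectedTable

variable {N K M : ℕ} {α β γ μ : ℝ}

lemma std_sq_le_min (h : IsExpectedTable N K M α β γ μ) (hx : 4 * (M : ℝ) ≤ N) :
    α * μ / M ≤ min α β := by
  have hα := h.white_drawn_pos
  have hμ := h.mean_pos
  rw [le_min_iff, div_le_iff₀ h.drawn_pos, div_le_iff₀ h.drawn_pos]
  constructor
  · gcongr
    linarith [h.drawn]
  · rw [mul_comm β]
    gcongr
    · linarith [h.drawn]
    · linarith [h.three_mul_mean_le_black_left hx]

lemma std_le_of_overflow (h : IsExpectedTable N K M α β γ μ) (hx : 4 * (M : ℝ) ≤ N)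
    {s r : ℝ} (hs : 1 ≤ s) (hsq : s ^ 2 = α * μ / M) (hoverflow : min (M : ℝ) K ≤ r + 1 + s) :
    s ≤ (r - μ) / s + 2 := by
  have hs_pos : 0 < s := by linarith
  have hsq_le : s ^ 2 ≤ r - μ + 1 + s := by
    obtain ⟨hα, hβ⟩ := le_min_iff.mp (h.std_sq_le_min hx)
    rcases min_le_iff.mp hoverflow with hM | hK
    · linarith [h.drawn]
    · linarith [h.black]
  rw [← sub_le_iff_le_add, le_div_iff₀ hs_pos]
  linarith

lemma exp_le_hypergeometricTail (h : IsExpectedTable N K M α β γ μ) (hx : 4 * (M : ℝ) ≤ N)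
    {s r : ℝ} (hs : 1 ≤ s) (hsq : s ^ 2 = α * μ / M) (hμr : μ ≤ r) (hrM : r ≤ M) (hrK : r ≤ K) :
    1 / 10 * Real.exp (-24 + -6 * ((r - μ) / s) ^ 2) ≤ hypergeometricTail N K M r := by
  have hs_pos : 0 < s := by linarith
  have hrL := Nat.le_ceil r
  have hLr := Nat.ceil_lt_add_one (h.mean_pos.le.trans hμr)
  have hLM : ⌈r⌉₊ ≤ M := Nat.ceil_le.mpr hrM
  have hLK : ⌈r⌉₊ ≤ K := Nat.ceil_le.mpr hrK
  have hfloor := Nat.floor_le hs_pos.le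
  set U := ⌈r⌉₊ + ⌊s⌋₊ with hU
  have hUs : (U : ℝ) ≤ r + 1 + s := by
    push_cast [hU]
    linarith
  rcases le_or_gt U (min M K) with hfits | hoverflow
  · obtain ⟨hUM, hUK⟩ := le_min_iff.mp hfits
    have hcard : s ≤ #(Icc ⌈r⌉₊ U) := by
      have : #(Icc ⌈r⌉₊ U) = ⌊s⌋₊ + 1 := by rw [Nat.card_Icc]; lia
      rw [this]
      exact_mod_cast (Nat.lt_floor_add_one s).le
    calc _ ≤ s * (3 / 4 * Real.exp (-(7 / 6 * ((r - μ) / s + 5 / 2) ^ 2)) / (4 * s + 1)) :=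
          exp_le_mul_exp_div_of_window hs _
      _ ≤ #(Icc ⌈r⌉₊ U) * _ := by gcongr
      _ ≤ hypergeometricTail N K M r := by
          refine card_mul_le_hypergeometricTail hrL hUM fun j hj ↦ ?_
          obtain ⟨hLj, hjU⟩ := mem_Icc.mp hj
          have hLj' : (⌈r⌉₊ : ℝ) ≤ j := by exact_mod_cast hLj
          have hjU' : (j : ℝ) ≤ U := by exact_mod_cast hjU
          exact h.exp_div_le_prob hx hs hsq (by lia) (by lia) (by linarith) (by linarith)
  · have hmin : min (M : ℝ) K ≤ r + 1 + s := by
      rw [← Nat.cast_min]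
      exact (Nat.cast_le.mpr hoverflow.le).trans hUs
    calc _ ≤ 3 / 4 * Real.exp (-(7 / 6 * ((r - μ) / s + 5 / 2) ^ 2)) / (4 * s + 1) :=
          exp_le_exp_div_of_overflow hs (h.std_le_of_overflow hx hs hsq hmin)
      _ ≤ hypergeometricProb N K M ⌈r⌉₊ :=
          h.exp_div_le_prob hx hs hsq hLM hLK (by linarith) (by linarith)
      _ ≤ hypergeometricTail N K M r := by
          simpa using card_mul_le_hypergeometricTail (c := hypergeometricProb N K M ⌈r⌉₊)
            hrL hLM (fun j hj ↦ by rw [Icc_self, mem_singleton] at hj; rw [hj])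

end IsExpectedTable

lemma sqrt_pi_div_le : Real.sqrt (Real.pi / 320) ≤ 1 / 10 := by
  rw [Real.sqrt_le_left (by norm_num)]
  linarith [Real.pi_lt_d2]

lemma mul_one_sub_le_two_mul {a b : ℝ} (ha0 : 0 ≤ a) (ha1 : a ≤ 1) (hab : a ≤ 2 * b)
    (hab' : 1 - a ≤ 2 * (1 - b)) : a * (1 - a) ≤ 2 * (b * (1 - b)) := by
  rcases le_total a b with hle | hle
  · calc a * (1 - a) ≤ b * (2 * (1 - b)) := by gcongr; linarith
      _ = _ := by ring
  · calc a * (1 - a) ≤ 2 * b * (1 - b) := by gcongr; linarith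
      _ = _ := by ring

lemma one_le_mul_mul_one_sub {m a b : ℝ} (hm : 0 ≤ m) (ha0 : 0 ≤ a) (ha1 : a ≤ 1)
    (hab : a ≤ 8 / 5 * b) (hab' : 1 - a ≤ 2 * (1 - b)) (hma : 4 ≤ m * a * (1 - a)) :
    1 ≤ m * (b * (1 - b)) := by
  have := mul_le_mul_of_nonneg_left
    (mul_one_sub_le_two_mul ha0 ha1 (by linarith : a ≤ 2 * b) hab') hm
  linarith

lemma parameters_pos_of_variance_pos {N K M : ℕ}
    (hvar : 0 < (M : ℝ) * (((K : ℝ) / N) * (1 - (K : ℝ) / N))) : 0 < M ∧ 0 < K ∧ K < N := by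
  have hM : M ≠ 0 := by rintro rfl; simp at hvar
  have hK : K ≠ 0 := by rintro rfl; simp at hvar
  have hN : N ≠ 0 := by rintro rfl; simp at hvar
  have hb : 0 < (K : ℝ) / N := by positivity
  have hb1 : 0 < 1 - (K : ℝ) / N :=
    pos_of_mul_pos_right (pos_of_mul_pos_right hvar M.cast_nonneg) hb.le
  rw [sub_pos, div_lt_one (by positivity)] at hb1
  exact ⟨by lia, by lia, by exact_mod_cast hb1⟩

lemma max_sub_mean_div_sq_le {m b ℓ s : ℝ} (hm : 0 < m) (hsq : s ^ 2 = m * (b * (1 - b))) :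
    ((max ℓ (m * b) - m * b) / s) ^ 2 ≤ (ℓ / m - b) ^ 2 * m / (b * (1 - b)) := by
  have hpositive_part : (max ℓ (m * b) - m * b) ^ 2 ≤ (ℓ - m * b) ^ 2 := by
    rcases max_cases ℓ (m * b) with ⟨hmax, -⟩ | ⟨hmax, -⟩
    · rw [hmax]
    · rw [hmax, sub_self, zero_pow two_ne_zero]
      positivity
  calc ((max ℓ (m * b) - m * b) / s) ^ 2 ≤ (ℓ - m * b) ^ 2 / s ^ 2 := by
        rw [div_pow]
        gcongr
    _ = (ℓ / m - b) ^ 2 * m / (b * (1 - b)) := by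
        rw [hsq]
        field_simp

theorem hypergeometric_tail_lower_bound_general (N K M : ℕ) (ℓ : ℝ) (hℓM : ℓ ≤ M) (hℓK : ℓ ≤ K)
    (hx : (M : ℝ) / N ≤ 1 / 4)
    (hvar : 1 ≤ (M : ℝ) * (((K : ℝ) / N) * (1 - (K : ℝ) / N))) :
    Real.sqrt (Real.pi / 320) * Real.exp (-24)
      * Real.exp (-6 * (ℓ / M - (K : ℝ) / N) ^ 2 * M / (((K : ℝ) / N) * (1 - (K : ℝ) / N)))
    ≤ hypergeometricTail N K M ℓ := by
  obtain ⟨hM, hK, hKN⟩ := parameters_pos_of_variance_pos (zero_lt_one.trans_le hvar)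
  have hMR : (0 : ℝ) < M := by exact_mod_cast hM
  have hx' : 4 * (M : ℝ) ≤ N := by
    rw [div_le_iff₀ (by exact_mod_cast hK.trans hKN)] at hx
    linarith
  have h := isExpectedTable_mul_div hK hKN hM (by exact_mod_cast (by linarith : (M : ℝ) < N))
  set b := (K : ℝ) / N
  have hs_sq := Real.sq_sqrt (zero_le_one.trans hvar)
  have hs := Real.one_le_sqrt.mpr hvar
  set s := Real.sqrt (M * (b * (1 - b)))
  have hexponent := max_sub_mean_div_sq_le (ℓ := ℓ) hMR hs_sq
  calc _ ≤ 1 / 10 * Real.exp (-24 + -6 * ((max ℓ (M * b) - M * b) / s) ^ 2) := by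
        rw [mul_assoc, ← Real.exp_add]
        gcongr ?_ * Real.exp (_ + ?_)
        · exact sqrt_pi_div_le
        · linarith [show -6 * (ℓ / M - b) ^ 2 * M / (b * (1 - b))
            = -6 * ((ℓ / M - b) ^ 2 * M / (b * (1 - b))) by ring]
    _ ≤ hypergeometricTail N K M (max ℓ (M * b)) :=
        h.exp_le_hypergeometricTail hx' hs (by rw [hs_sq]; field_simp) (le_max_right _ _)
          (max_le hℓM (by linarith [h.drawn, h.white_drawn_pos]))
          (max_le hℓK (by linarith [h.black, h.black_left_pos]))
    _ ≤ hypergeometricTail N K M ℓ := hypergeometricTail_antitone (le_max_left _ _)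

/-- Hypergeometric lower tail bound: for a real `0 ≤ ℓ ≤ M` with `ℓ < K` and `M - ℓ < N - K`,
setting `a = ℓ/M`, `b = K/N`, `x = M/N`, if `a ≤ (8/5)b`, `1-a ≤ 2(1-b)`, `x ≤ 1/4` and
`M·a·(1-a) ≥ 4`, then `Pr[X ≥ ℓ] ≥ √(π/320)·e^{-24}·e^{-6(a-b)²M/(b(1-b))}`. -/
theorem hypergeometric_tail_lower_bound (N K M : ℕ) (ℓ : ℝ)
    (hℓ0 : 0 ≤ ℓ) (hℓM : ℓ ≤ M) (hℓK : ℓ < K) (hMN : (M:ℝ) - ℓ < (N:ℝ) - K)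
    (hK0 : 0 < K) (hKN : K < N)
    (hab1 : ℓ/M ≤ (8/5) * ((K:ℝ)/N))
    (hab2 : 1 - ℓ/M ≤ 2 * (1 - (K:ℝ)/N))
    (hx : (M:ℝ)/N ≤ 1/4)
    (hMa : 4 ≤ (M:ℝ) * (ℓ/M) * (1 - ℓ/M)) :
    Real.sqrt (Real.pi / 320) * Real.exp (-24)
      * Real.exp (-6 * (ℓ/M - (K:ℝ)/N)^2 * M / (((K:ℝ)/N) * (1 - (K:ℝ)/N)))
    ≤ ∑ j ∈ Finset.range (M + 1),
        (if ℓ ≤ (j:ℝ) then (K.choose j * (N - K).choose (M - j) : ℝ) / (N.choose M)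
         else 0) := by
  have hvar : 1 ≤ (M : ℝ) * ((K : ℝ) / N * (1 - (K : ℝ) / N)) :=
    one_le_mul_mul_one_sub M.cast_nonneg (by positivity) (div_le_one_of_le₀ hℓM M.cast_nonneg)
      hab1 hab2 hMa
  exact hypergeometric_tail_lower_bound_general N K M ℓ hℓM hℓK.le hx hvar
end

section
/- Let A be a set of m ≤ n/4 elements drawn uniformly without replacement from n elements, with β = k/n satisfying 4ε ≤ β ≤ 1/2, m·β ≥ 8, and k ≥ 200. Let u be the r-th smallest element of A. If r ≤ ⌈β·m⌉, then the probability that u has rank at most k - nε in the original set (i.e., u is 'small') is at least η·e^{-12·ε²·m/(β(1-β))}, where η = √(π/320)·e^{-24}. -/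
/-!
The hypergeometric weights `p j` satisfy the recurrence
`p (j + 1) * ((j + 1) * (N - K - m + j + 1)) = p j * ((K - j) * (m - j))`, and the difference of
the two factors is `(j + 1) * (N + 2) - (K + 1) * (m + 1)`. Hence `p` is unimodal, its mode is
`⌊(K + 1) * (m + 1) / (N + 2)⌋`, and past the mode it decays slowly: `X` steps above the mean
`p` loses a factor of at most `exp (-c)` per step, with `c` of order `X / x`, where `x` is any
number comparable to the mean.

Summing the recurrence against test functions gives the mean and the variance, so by Chebyshev's
inequality three quarters of the mass lie within `2 * √x` of the mean, and the weight at the mode is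
at least of order `1 / √x`. Walking from the mode to `√x / 4` beyond the threshold `⌈x⌉` costs a
factor `exp (-12 * (x - mean) ^ 2 / x - 12)`, and the `√x / 4` weights met beyond the threshold, all
at least as large as the last one, compensate the factor `1 / √x`.
-/

open Finset Real

lemma cast_choose_succ_mul_succ (n k : ℕ) :
    (n.choose (k + 1) : ℝ) * (k + 1) = n.choose k * ((n : ℝ) - k) := by
  rcases le_or_gt k n with hk | hk
  · exact_mod_cast congrArg (Nat.cast (R := ℝ)) (Nat.choose_succ_right_eq n k)
  · simp [Nat.choose_eq_zero_of_lt hk, Nat.choose_eq_zero_of_lt (Nat.lt_succ_of_lt hk)]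

lemma card_filter_abs_sub_le (s : Finset ℕ) (a : ℝ) {t : ℝ} (ht : 0 ≤ t) :
    (#(s.filter fun j : ℕ ↦ |(j : ℝ) - a| ≤ t) : ℝ) ≤ 2 * t + 1 := by
  have hsub : s.filter (fun j : ℕ ↦ |(j : ℝ) - a| ≤ t) ⊆ Icc ⌈a - t⌉₊ ⌊a + t⌋₊ := fun j hj ↦ by
    obtain ⟨hlo, hhi⟩ := abs_le.1 (mem_filter.1 hj).2
    exact mem_Icc.2 ⟨Nat.ceil_le.2 (by linarith), Nat.le_floor (by linarith)⟩
  have hcard := (card_le_card hsub).trans_eq (Nat.card_Icc _ _)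
  rcases lt_or_ge (a + t) 0 with hat | hat
  · rw [Nat.floor_of_nonpos hat.le] at hcard
    have : (#(s.filter fun j : ℕ ↦ |(j : ℝ) - a| ≤ t) : ℝ) ≤ 1 := mod_cast hcard.trans (by omega)
    linarith
  · have hceil := Nat.le_ceil (a - t)
    have hfloor := Nat.floor_le hat
    rcases le_total ⌈a - t⌉₊ (⌊a + t⌋₊ + 1) with h | h
    · have : (#(s.filter fun j : ℕ ↦ |(j : ℝ) - a| ≤ t) : ℝ) ≤ ⌊a + t⌋₊ + 1 - ⌈a - t⌉₊ := by
        rw [← Nat.cast_succ, ← Nat.cast_sub h]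
        exact_mod_cast hcard
      linarith
    · rw [Nat.sub_eq_zero_of_le h, Nat.le_zero] at hcard
      rw [hcard, Nat.cast_zero]
      positivity

lemma sum_sub_sum_mul_sq_div_le {s : Finset ℕ} {p : ℕ → ℝ} {P t : ℝ} (a : ℝ)
    (hp : ∀ j ∈ s, 0 ≤ p j) (hpP : ∀ j ∈ s, p j ≤ P) (hP : 0 ≤ P) (ht : 0 < t) :
    ∑ j ∈ s, p j - (∑ j ∈ s, p j * (j - a) ^ 2) / t ^ 2 ≤ (2 * t + 1) * P := by
  have hpointwise : ∀ j ∈ s,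
      p j ≤ p j * (j - a) ^ 2 / t ^ 2 + if |(j : ℝ) - a| ≤ t then P else 0 := fun j hj ↦ by
    split_ifs with hjt
    · have : 0 ≤ p j * (j - a) ^ 2 / t ^ 2 := by have := hp j hj; positivity
      linarith [hpP j hj]
    · rw [add_zero, le_div_iff₀ (by positivity)]
      refine mul_le_mul_of_nonneg_left ?_ (hp j hj)
      rw [← sq_abs ((j : ℝ) - a)]
      exact pow_le_pow_left₀ ht.le (not_le.1 hjt).le 2
  have hsum := sum_le_sum hpointwise
  rw [sum_add_distrib, ← sum_div, ← sum_filter, sum_const, nsmul_eq_mul] at hsum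
  have := mul_le_mul_of_nonneg_right (card_filter_abs_sub_le s a ht.le) hP
  linarith

lemma mul_exp_neg_le_of_forall_succ {p : ℕ → ℝ} {a b : ℕ} {c : ℝ} (hab : a ≤ b)
    (h : ∀ j, a ≤ j → j < b → p j * exp (-c) ≤ p (j + 1)) :
    p a * exp (-(c * (b - a))) ≤ p b := by
  obtain ⟨d, rfl⟩ := Nat.exists_eq_add_of_le hab
  have hgeom := geom_le (u := fun i ↦ p (a + i)) (exp_pos (-c)).le d fun i hi ↦ by
    rw [mul_comm]
    exact h (a + i) (by omega) (by omega)
  rw [← exp_nat_mul, mul_comm] at hgeom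
  rwa [Nat.cast_add, add_sub_cancel_left, mul_comm c, ← mul_neg]

lemma mul_le_sum_Icc_of_antitoneOn {p : ℕ → ℝ} {a b : ℕ} (hab : a ≤ b)
    (hp : AntitoneOn p (Set.Icc a b)) :
    ((b : ℝ) - a + 1) * p b ≤ ∑ j ∈ Icc a b, p j := by
  have h := card_nsmul_le_sum (Icc a b) p (p b) fun j hj ↦
    hp (by simpa using hj) (Set.right_mem_Icc.2 hab) (mem_Icc.1 hj).2
  rw [Nat.card_Icc, nsmul_eq_mul, Nat.cast_sub (by omega)] at h
  push_cast at h
  linarith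

lemma add_one_add_sqrt_div_four_le {x : ℝ} (hx : 8 ≤ x) : x + 1 + √x / 4 ≤ 1.22 * x := by
  have hsqrt : √x ≤ 0.36 * x := sqrt_le_iff.2 ⟨by positivity, by nlinarith⟩
  linarith

lemma six_mul_div_mul_add_one_le {x δ : ℝ} (hx : 4 ≤ x) (hδ : 0 ≤ δ) :
    6 * (δ + 1 + √x / 4) / x * (δ + 1 + √x / 4 + 1) ≤ 12 + 12 * δ ^ 2 / x := by
  have hsqrt : 2 ≤ √x := le_sqrt_of_sq_le (by linarith)
  have hsq : √x ^ 2 = x := sq_sqrt (by linarith)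
  have hx0 : 0 < x := by linarith
  have hprod : (δ + 1 + √x / 4) * (δ + 1 + √x / 4 + 1) ≤ 2 * (δ ^ 2 + x) :=
    calc (δ + 1 + √x / 4) * (δ + 1 + √x / 4 + 1) ≤ (δ + 1 + √x / 4 + 1 / 2) ^ 2 := by linarith
      _ ≤ (δ + √x) ^ 2 := pow_le_pow_left₀ (by positivity) (by linarith) 2
      _ ≤ 2 * (δ ^ 2 + √x ^ 2) := add_sq_le
      _ = 2 * (δ ^ 2 + x) := by rw [hsq]
  calc 6 * (δ + 1 + √x / 4) / x * (δ + 1 + √x / 4 + 1)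
      = 6 * ((δ + 1 + √x / 4) * (δ + 1 + √x / 4 + 1)) / x := by ring
    _ ≤ 6 * (2 * (δ ^ 2 + x)) / x := by gcongr
    _ = 12 + 12 * δ ^ 2 / x := by
      field_simp
      ring

namespace Hypergeometric

/-- The probability that `m` draws without replacement from `N` elements, `K` of which are marked,
contain exactly `j` marked ones. Truncated subtraction makes this meaningful only for `K ≤ N` and
`j ≤ m`. -/
noncomputable def pmf (N K m j : ℕ) : ℝ :=
  (K.choose j * (N - K).choose (m - j) : ℝ) / N.choose m

/-- The expected number of marked elements among `m` draws without replacement from `N` elements,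
`K` of which are marked. -/
noncomputable def mean (N K m : ℕ) : ℝ := K * m / N

/-- The most likely number of marked elements among `m` draws without replacement from `N`
elements, `K` of which are marked. It is the largest mode: where `p j = p (j + 1)` are both
maximal, this is `j + 1`. -/
def mode (N K m : ℕ) : ℕ := (K + 1) * (m + 1) / (N + 2)

variable {N K m : ℕ}

lemma pmf_nonneg (N K m j : ℕ) : 0 ≤ pmf N K m j := by
  unfold pmf
  positivity

lemma pmf_eq_zero {j : ℕ} (hj : N - K < m - j) : pmf N K m j = 0 := by
  simp [pmf, Nat.choose_eq_zero_of_lt hj]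

lemma sum_pmf (hKN : K ≤ N) (hmN : m ≤ N) :
    ∑ j ∈ range (m + 1), pmf N K m j = 1 := by
  have hvandermonde := Nat.add_choose_eq K (N - K) m
  rw [Nat.add_sub_cancel' hKN, Nat.sum_antidiagonal_eq_sum_range_succ_mk] at hvandermonde
  have hpos : (0 : ℝ) < N.choose m := mod_cast Nat.choose_pos hmN
  simp only [pmf]
  rw [← sum_div, div_eq_one_iff_eq hpos.ne', hvandermonde]
  push_cast
  rfl

lemma pmf_succ_mul (hKN : K ≤ N) {j : ℕ} (hj : j < m) :
    pmf N K m (j + 1) * ((j + 1) * ((N : ℝ) - K - m + j + 1)) =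
      pmf N K m j * (((K : ℝ) - j) * (m - j)) := by
  obtain ⟨d, rfl⟩ := Nat.exists_eq_add_of_lt hj
  have hmarked := cast_choose_succ_mul_succ K j
  have hunmarked := cast_choose_succ_mul_succ (N - K) d
  rw [Nat.cast_sub hKN] at hunmarked
  simp only [pmf, show j + d + 1 - (j + 1) = d by omega,
    show j + d + 1 - j = d + 1 by omega, div_mul_eq_mul_div]
  congr 1
  push_cast
  linear_combination ((N - K).choose d : ℝ) * ((N : ℝ) - K - d) * hmarked
    - (K.choose j : ℝ) * ((K : ℝ) - j) * hunmarked

lemma sum_pmf_mul_shift (hKN : K ≤ N) (g : ℕ → ℝ) :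
    ∑ j ∈ range (m + 1), pmf N K m j * (g j * (j * ((N : ℝ) - K - m + j))) =
      ∑ j ∈ range (m + 1), pmf N K m j * (g (j + 1) * (((K : ℝ) - j) * (m - j))) := by
  rw [sum_range_succ', sum_range_succ _ m]
  simp only [Nat.cast_zero, zero_mul, mul_zero, sub_self, add_zero]
  refine sum_congr rfl fun j hj ↦ ?_
  push_cast
  linear_combination g (j + 1) * pmf_succ_mul hKN (mem_range.1 hj)

lemma mean_nonneg (N K m : ℕ) : 0 ≤ mean N K m := by
  unfold mean
  positivity

lemma natCast_mul_mean (hN : 0 < N) : (N : ℝ) * mean N K m = K * m :=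
  mul_div_cancel₀ _ (by exact_mod_cast hN.ne')

lemma natCast_mul_mean_le_left {c : ℕ} (hc : c * m ≤ N) : c * mean N K m ≤ K := by
  have hle : ((c : ℝ) * m) / N ≤ 1 :=
    div_le_one_of_le₀ (by exact_mod_cast hc) N.cast_nonneg
  calc c * mean N K m = K * ((c : ℝ) * m / N) := by unfold mean; ring
    _ ≤ K := mul_le_of_le_one_right K.cast_nonneg hle

lemma mean_le_left (hmN : m ≤ N) : mean N K m ≤ K := by
  simpa using natCast_mul_mean_le_left (c := 1) (by simpa using hmN)

lemma mean_le_right (hKN : K ≤ N) : mean N K m ≤ m := by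
  rw [mean, mul_comm]
  exact mean_le_left hKN

lemma sum_pmf_mul_sub_mean (hKN : K ≤ N) (hN : 0 < N) :
    ∑ j ∈ range (m + 1), pmf N K m j * (j - mean N K m) = 0 := by
  have hshift := sub_eq_zero.2 (sum_pmf_mul_shift (m := m) hKN fun _ ↦ 1)
  rw [← sum_sub_distrib] at hshift
  have hN0 : (N : ℝ) ≠ 0 := by exact_mod_cast hN.ne'
  refine (mul_eq_zero.1 ?_).resolve_left hN0
  rw [← hshift, mul_sum]
  refine sum_congr rfl fun j _ ↦ ?_
  linear_combination -pmf N K m j * natCast_mul_mean (K := K) (m := m) hN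

lemma sum_pmf_mul_sub_mean_sq (hKN : K ≤ N) (hmN : m ≤ N) (hN : 0 < N) :
    ((N : ℝ) - 1) * ∑ j ∈ range (m + 1), pmf N K m j * (j - mean N K m) ^ 2 =
      (K - mean N K m) * (m - mean N K m) := by
  have hmean := natCast_mul_mean (K := K) (m := m) hN
  have hshift := sub_eq_zero.2 (sum_pmf_mul_shift (m := m) hKN fun j ↦ j - mean N K m)
  rw [← sum_sub_distrib] at hshift
  calc ((N : ℝ) - 1) * ∑ j ∈ range (m + 1), pmf N K m j * (j - mean N K m) ^ 2
      = (K - mean N K m) * (m - mean N K m) * ∑ j ∈ range (m + 1), pmf N K m j -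
          (K + m - 2 * mean N K m) * ∑ j ∈ range (m + 1), pmf N K m j * (j - mean N K m) + 0 := by
        rw [← hshift, mul_sum, mul_sum, mul_sum, ← sum_sub_distrib, ← sum_add_distrib]
        refine sum_congr rfl fun j _ ↦ ?_
        push_cast
        linear_combination -pmf N K m j * (j - mean N K m) * hmean
    _ = (K - mean N K m) * (m - mean N K m) := by
        rw [sum_pmf hKN hmN, sum_pmf_mul_sub_mean hKN hN]
        ring

lemma sum_pmf_mul_sub_mean_sq_le (hKN : K ≤ N) (hmN : m ≤ N) (hN : 1 < N) :
    ∑ j ∈ range (m + 1), pmf N K m j * (j - mean N K m) ^ 2 ≤ mean N K m := by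
  rcases m.eq_zero_or_pos with rfl | hm
  · simp [mean]
  have hmean := natCast_mul_mean (K := K) (m := m) (N := N) (by omega)
  have hmeanK := mean_le_left (K := K) hmN
  have hN1 : (1 : ℝ) < N := by exact_mod_cast hN
  have hm1 : (1 : ℝ) ≤ m := by exact_mod_cast hm
  refine le_of_mul_le_mul_left ?_ (sub_pos.2 hN1)
  calc ((N : ℝ) - 1) * ∑ j ∈ range (m + 1), pmf N K m j * (j - mean N K m) ^ 2
      = (K - mean N K m) * (m - mean N K m) := sum_pmf_mul_sub_mean_sq hKN hmN (by omega)
    _ = (N - K - m + mean N K m) * mean N K m := by linear_combination -hmean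
    _ ≤ (N - 1) * mean N K m :=
        mul_le_mul_of_nonneg_right (by linarith) (mean_nonneg N K m)

lemma lt_mode_iff {j : ℕ} : j < mode N K m ↔ (j + 1) * (N + 2) ≤ (K + 1) * (m + 1) :=
  Nat.le_div_iff_mul_le (by omega)

lemma mode_le (hKN : K ≤ N) : mode N K m ≤ m := by
  refine not_lt.1 fun h ↦ ?_
  have := lt_mode_iff.1 h
  nlinarith

lemma pmf_le_pmf_succ (hKN : K ≤ N) {j : ℕ} (hj : j < mode N K m) :
    pmf N K m j ≤ pmf N K m (j + 1) := by
  have hjm : j < m := hj.trans_le (mode_le hKN)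
  rcases lt_or_ge (N - K) (m - j) with hzero | hpos
  · rw [pmf_eq_zero hzero]
    exact pmf_nonneg ..
  have hweight : (0 : ℝ) < (j + 1) * ((N : ℝ) - K - m + j + 1) := by
    have : (m : ℝ) + K ≤ N + j := by exact_mod_cast (by omega : m + K ≤ N + j)
    exact mul_pos (by positivity) (by linarith)
  have hmode : ((j : ℝ) + 1) * (N + 2) ≤ (K + 1) * (m + 1) := by
    exact_mod_cast lt_mode_iff.1 hj
  refine le_of_mul_le_mul_right ?_ hweight
  rw [pmf_succ_mul hKN hjm]
  exact mul_le_mul_of_nonneg_left (by linarith) (pmf_nonneg ..)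

lemma pmf_succ_le_pmf (hKN : K ≤ N) (hmN : m ≤ N) {j : ℕ} (hj : mode N K m ≤ j)
    (hjm : j < m) :
    pmf N K m (j + 1) ≤ pmf N K m j := by
  have hmode : ((K : ℝ) + 1) * (m + 1) < (j + 1) * (N + 2) := by
    exact_mod_cast not_le.1 (mt lt_mode_iff.2 hj.not_gt)
  have hK : (K : ℝ) ≤ N := by exact_mod_cast hKN
  have hm : (m : ℝ) ≤ N := by exact_mod_cast hmN
  have hgap : (0 : ℝ) < (N : ℝ) - K - m + j + 1 := by
    have : 0 < ((N : ℝ) - K + 1) * (N - m + 1) := mul_pos (by linarith) (by linarith)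
    exact pos_of_mul_pos_left (b := (N : ℝ) + 2) (by linarith) (by positivity)
  refine le_of_mul_le_mul_right ?_ (mul_pos (by positivity : (0 : ℝ) < j + 1) hgap)
  rw [pmf_succ_mul hKN hjm]
  exact mul_le_mul_of_nonneg_left (by linarith) (pmf_nonneg ..)

lemma monotoneOn_pmf (hKN : K ≤ N) :
    MonotoneOn (pmf N K m) (Set.Iic (mode N K m)) :=
  monotoneOn_of_le_add_one Set.ordConnected_Iic fun _ _ _ hj ↦
    pmf_le_pmf_succ hKN (Nat.lt_of_succ_le hj)

lemma antitoneOn_pmf (hKN : K ≤ N) (hmN : m ≤ N) :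
    AntitoneOn (pmf N K m) (Set.Icc (mode N K m) m) :=
  antitoneOn_of_add_one_le Set.ordConnected_Icc fun _ _ hj hj' ↦
    pmf_succ_le_pmf hKN hmN hj.1 (Nat.lt_of_succ_le hj'.2)

lemma pmf_le_pmf_mode (hKN : K ≤ N) (hmN : m ≤ N) {j : ℕ} (hj : j ≤ m) :
    pmf N K m j ≤ pmf N K m (mode N K m) := by
  rcases le_total j (mode N K m) with h | h
  · exact monotoneOn_pmf hKN h Set.self_mem_Iic h
  · exact antitoneOn_pmf hKN hmN ⟨le_rfl, mode_le hKN⟩ ⟨h, hj⟩ h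

lemma mode_lt_mean_add_one (hKN : K ≤ N) (hmN : m ≤ N) (hN : 0 < N) :
    mode N K m < mean N K m + 1 := by
  have hmode : (mode N K m : ℝ) * (N + 2) ≤ (K + 1) * (m + 1) := by
    exact_mod_cast Nat.div_mul_le_self ((K + 1) * (m + 1)) (N + 2)
  have hmean := natCast_mul_mean (K := K) (m := m) hN
  have hmean0 := mean_nonneg N K m
  have hinclusion_exclusion : (K : ℝ) + m ≤ N + mean N K m := by
    have hK : (0 : ℝ) ≤ N - K := sub_nonneg.2 (by exact_mod_cast hKN)
    have hm : (0 : ℝ) ≤ N - m := sub_nonneg.2 (by exact_mod_cast hmN)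
    refine le_of_mul_le_mul_left ?_ (by exact_mod_cast hN : (0 : ℝ) < N)
    linarith [mul_nonneg hK hm]
  exact lt_of_mul_lt_mul_right (a := (N : ℝ) + 2) (by linarith) (by positivity)

lemma mean_lt_mode_add_one (hKN : K ≤ N) (hmN : m ≤ N) (hN : 0 < N) :
    mean N K m < mode N K m + 1 := by
  have hmode : ((K : ℝ) + 1) * (m + 1) < (mode N K m + 1) * (N + 2) := by
    exact_mod_cast not_le.1 (mt lt_mode_iff.2 (lt_irrefl _))
  have hmean := natCast_mul_mean (K := K) (m := m) hN
  have hmeanK := mean_le_left (K := K) hmN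
  have hmeanm := mean_le_right (m := m) hKN
  exact lt_of_mul_lt_mul_right (a := (N : ℝ) + 2) (by linarith) (by positivity)

lemma mode_le_ceil (hKN : K ≤ N) (hmN : m ≤ N) (hN : 0 < N) {x : ℝ} (hx : mean N K m ≤ x) :
    mode N K m ≤ ⌈x⌉₊ := by
  have hlt : (mode N K m : ℝ) < (⌈x⌉₊ + 1 : ℕ) := by
    push_cast
    linarith [mode_lt_mean_add_one hKN hmN hN, Nat.le_ceil x]
  exact Nat.lt_succ_iff.1 (by exact_mod_cast hlt)

lemma one_div_six_le_sqrt_mul_pmf_mode (hKN : K ≤ N) (hmN : m ≤ N) (hN : 1 < N) {x : ℝ}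
    (hx : 4 ≤ x) (hmeanx : mean N K m ≤ x) :
    1 / 6 ≤ √x * pmf N K m (mode N K m) := by
  have hsqrt : 2 ≤ √x := le_sqrt_of_sq_le (by linarith)
  have hchebyshev := sum_sub_sum_mul_sq_div_le (s := range (m + 1)) (mean N K m)
    (fun j _ ↦ pmf_nonneg N K m j) (fun j hj ↦ pmf_le_pmf_mode hKN hmN (mem_range_succ_iff.1 hj))
    (pmf_nonneg ..) (by positivity : 0 < 2 * √x)
  have hvar := (sum_pmf_mul_sub_mean_sq_le hKN hmN hN).trans hmeanx
  have htail : (∑ j ∈ range (m + 1), pmf N K m j * (j - mean N K m) ^ 2) / (2 * √x) ^ 2 ≤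
      1 / 4 := by
    rw [mul_pow, sq_sqrt (by linarith), div_le_iff₀ (by positivity)]
    linarith
  rw [sum_pmf hKN hmN] at hchebyshev
  linarith [mul_le_mul_of_nonneg_right hsqrt (pmf_nonneg N K m (mode N K m))]

lemma pmf_mul_exp_neg_le_pmf_succ (hKN : K ≤ N) (hmN : m ≤ N) {j : ℕ} {c X : ℝ}
    (hjK : j < K) (hjm : j < m) (hX : j + 1 ≤ mean N K m + X)
    (hc : X * (N + 2) ≤ c * ((K - j) * (m - j))) :
    pmf N K m j * exp (-c) ≤ pmf N K m (j + 1) := by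
  have hmean := natCast_mul_mean (K := K) (m := m) (hjK.pos.trans_le hKN)
  have hmeanK := mean_le_left (K := K) hmN
  have hmeanm := mean_le_right (m := m) hKN
  have hweight : (0 : ℝ) < (K - j) * (m - j) :=
    mul_pos (sub_pos.2 (by exact_mod_cast hjK)) (sub_pos.2 (by exact_mod_cast hjm))
  have hratio : ((j : ℝ) + 1) * ((N : ℝ) - K - m + j + 1) ≤ exp c * ((K - j) * (m - j)) := by
    have hXN := mul_le_mul_of_nonneg_right hX (by positivity : (0 : ℝ) ≤ N + 2)
    have hexp := mul_le_mul_of_nonneg_right (add_one_le_exp c) hweight.le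
    linarith
  rw [exp_neg, ← div_eq_mul_inv, div_le_iff₀ (exp_pos c)]
  refine le_of_mul_le_mul_right ?_ hweight
  rw [← pmf_succ_mul hKN hjm, mul_assoc]
  exact mul_le_mul_of_nonneg_left hratio (pmf_nonneg ..)

lemma pmf_mode_mul_exp_neg_le_pmf (hKN : K ≤ N) (hmN : m ≤ N) (hN : 0 < N) {J : ℕ} {c X : ℝ}
    (hJ : mode N K m ≤ J) (hJK : J ≤ K) (hJm : J ≤ m) (hX : J ≤ mean N K m + X) (hc : 0 ≤ c)
    (hcX : X * (N + 2) ≤ c * ((K - J) * (m - J))) :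
    pmf N K m (mode N K m) * exp (-(c * (X + 1))) ≤ pmf N K m J := by
  have hJK' : (J : ℝ) ≤ K := by exact_mod_cast hJK
  have hJm' : (J : ℝ) ≤ m := by exact_mod_cast hJm
  have hchain := mul_exp_neg_le_of_forall_succ (p := pmf N K m) (c := c) hJ fun j _ hjJ ↦ by
    have hjJ' : (j : ℝ) + 1 ≤ J := by exact_mod_cast hjJ
    have hweight : ((K : ℝ) - J) * (m - J) ≤ (K - j) * (m - j) :=
      mul_le_mul (by linarith) (by linarith) (by linarith) (by linarith)
    exact pmf_mul_exp_neg_le_pmf_succ hKN hmN (by omega) (by omega) (hjJ'.trans hX)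
      (hcX.trans (mul_le_mul_of_nonneg_left hweight hc))
  have hdist : (J : ℝ) - mode N K m ≤ X + 1 := by
    linarith [mean_lt_mode_add_one hKN hmN hN]
  refine le_trans ?_ hchain
  gcongr
  exact pmf_nonneg ..

lemma mul_add_two_le_six_mul {x y : ℝ} (hmN : 4 * m ≤ N) (hx : 8 ≤ x) (hxm : x ≤ m / 2)
    (hxmean : x ≤ 4 / 3 * mean N K m) (hy : y ≤ 1.22 * x) :
    x * (N + 2) ≤ 6 * ((K - y) * (m - y)) := by
  have hmN' : 4 * (m : ℝ) ≤ N := by exact_mod_cast hmN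
  have hN : (64 : ℝ) ≤ N := by linarith
  have hxN : x * N ≤ 4 / 3 * (K * m) :=
    calc x * N ≤ 4 / 3 * mean N K m * N := by gcongr
      _ = 4 / 3 * (K * m) := by
        rw [← natCast_mul_mean (by exact_mod_cast (by linarith : (0 : ℝ) < N))]
        ring
  have hxK : 3 * x ≤ K := by
    have := natCast_mul_mean_le_left (K := K) hmN
    push_cast at this
    linarith
  -- `1 - 1.22 / 3 ≥ 0.593` since `x ≤ K / 3`, and `1 - 1.22 / 2 = 0.39` since `x ≤ m / 2`
  have hweight : 0.593 * (K : ℝ) * (0.39 * m) ≤ (K - y) * (m - y) :=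
    mul_le_mul (by linarith) (by linarith) (by positivity) (by linarith)
  have hxN' : x * 64 ≤ x * N := by gcongr
  linarith

lemma pmf_mode_mul_exp_neg_sq_div_le_pmf (hKN : K ≤ N) (hmN : 4 * m ≤ N) {x : ℝ} (hx : 8 ≤ x)
    (hxm : x ≤ m / 2) (hmeanx : mean N K m ≤ x) (hxmean : x ≤ 4 / 3 * mean N K m) {J : ℕ}
    (hJ : mode N K m ≤ J) (hJx : J ≤ x + 1 + √x / 4) :
    pmf N K m (mode N K m) * exp (-(12 + 12 * (x - mean N K m) ^ 2 / x)) ≤ pmf N K m J := by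
  have hJx' := hJx.trans (add_one_add_sqrt_div_four_le hx)
  have hmK : 4 * mean N K m ≤ K := by exact_mod_cast natCast_mul_mean_le_left hmN
  have hm0 : 0 < m := by exact_mod_cast (by linarith : (0 : ℝ) < m)
  have hJK : J ≤ K := by exact_mod_cast (by linarith : (J : ℝ) ≤ K)
  have hJm : J ≤ m := by exact_mod_cast (by linarith : (J : ℝ) ≤ m)
  set X : ℝ := x - mean N K m + 1 + √x / 4 with hX_def
  have hX : 0 ≤ X := by linarith [sqrt_nonneg x]
  have hslope : X * (N + 2) ≤ 6 * X / x * ((K - J) * (m - J)) :=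
    calc X * (N + 2) = X / x * (x * (N + 2)) := by field_simp
      _ ≤ X / x * (6 * ((K - J) * (m - J))) :=
        mul_le_mul_of_nonneg_left (mul_add_two_le_six_mul hmN hx hxm hxmean hJx') (by positivity)
      _ = 6 * X / x * ((K - J) * (m - J)) := by ring
  calc pmf N K m (mode N K m) * exp (-(12 + 12 * (x - mean N K m) ^ 2 / x))
      ≤ pmf N K m (mode N K m) * exp (-(6 * X / x * (X + 1))) := by
        gcongr
        · exact pmf_nonneg ..
        · exact six_mul_div_mul_add_one_le (by linarith) (by linarith)
    _ ≤ pmf N K m J := pmf_mode_mul_exp_neg_le_pmf hKN (by omega) (by omega) hJ hJK hJm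
        (by linarith) (by positivity) hslope

theorem exp_neg_sq_div_le_sum_pmf (hKN : K ≤ N) (hmN : 4 * m ≤ N) {x : ℝ} (hx : 8 ≤ x)
    (hxm : x ≤ m / 2) (hmeanx : mean N K m ≤ x) (hxmean : x ≤ 4 / 3 * mean N K m) {r : ℕ}
    (hr : r ≤ ⌈x⌉₊) :
    exp (-12) / 24 * exp (-(12 * (x - mean N K m) ^ 2 / x)) ≤ ∑ j ∈ Icc r m, pmf N K m j := by
  have hm0 : 0 < m := by exact_mod_cast (by linarith : (0 : ℝ) < m)
  set p := pmf N K m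
  set M := mode N K m
  set J := ⌈x⌉₊ + ⌊√x / 4⌋₊ with hJ_def
  have hJx : (J : ℝ) ≤ x + 1 + √x / 4 := by
    rw [hJ_def, Nat.cast_add]
    exact add_le_add (Nat.ceil_lt_add_one (by linarith)).le (Nat.floor_le (by positivity))
  have hJm : J ≤ m := by
    have := hJx.trans (add_one_add_sqrt_div_four_le hx)
    exact_mod_cast (by linarith : (J : ℝ) ≤ m)
  have hMx : M ≤ ⌈x⌉₊ := mode_le_ceil hKN (by omega) (by omega) hmeanx
  have hpM : 1 / 6 ≤ √x * p M :=
    one_div_six_le_sqrt_mul_pmf_mode hKN (by omega) (by omega) (by linarith) hmeanx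
  calc exp (-12) / 24 * exp (-(12 * (x - mean N K m) ^ 2 / x))
      = 1 / 24 * exp (-(12 + 12 * (x - mean N K m) ^ 2 / x)) := by
        rw [neg_add, exp_add]
        ring
    _ ≤ √x / 4 * p M * exp (-(12 + 12 * (x - mean N K m) ^ 2 / x)) := by
        gcongr
        linarith
    _ ≤ √x / 4 * p J := by
        rw [mul_assoc]
        gcongr
        exact pmf_mode_mul_exp_neg_sq_div_le_pmf hKN hmN hx hxm hmeanx hxmean
          (hMx.trans (Nat.le_add_right _ _)) hJx
    _ ≤ ((J : ℝ) - ⌈x⌉₊ + 1) * p J := by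
        gcongr
        · exact pmf_nonneg ..
        · rw [hJ_def, Nat.cast_add, add_sub_cancel_left]
          exact (Nat.lt_floor_add_one _).le
    _ ≤ ∑ j ∈ Icc ⌈x⌉₊ J, p j :=
        mul_le_sum_Icc_of_antitoneOn (Nat.le_add_right _ _)
          ((antitoneOn_pmf hKN (by omega)).mono (Set.Icc_subset_Icc hMx hJm))
    _ ≤ ∑ j ∈ Icc r m, p j :=
        sum_le_sum_of_subset_of_nonneg (Icc_subset_Icc hr hJm) fun _ _ _ ↦ pmf_nonneg ..

end Hypergeometric

lemma sqrt_pi_div_mul_exp_le : √(π / 320) * exp (-24) ≤ exp (-12) / 24 := by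
  have hsqrt : √(π / 320) ≤ 1 := sqrt_le_one.2 (by linarith [pi_lt_four])
  have hexp : exp (-12) ≤ 1 / 24 := by
    rw [exp_neg, ← one_div]
    exact one_div_le_one_div_of_le (by norm_num)
      (le_trans (by norm_num) (quadratic_le_exp_of_nonneg (by norm_num : (0 : ℝ) ≤ 12)))
  calc √(π / 320) * exp (-24) ≤ 1 * exp (-24) := by gcongr
    _ = exp (-12) * exp (-12) := by rw [one_mul, ← exp_add]; norm_num
    _ ≤ exp (-12) / 24 := by
        rw [div_eq_mul_one_div]
        gcongr

lemma neg_twelve_mul_div_le {β ε m : ℝ} (hβ0 : 0 < β) (hβ1 : β < 1) (hm : 0 < m) :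
    -12 * ε ^ 2 * m / (β * (1 - β)) ≤ -(12 * (ε * m) ^ 2 / (β * m)) :=
  calc -12 * ε ^ 2 * m / (β * (1 - β)) = -(12 * ε ^ 2 * m / (β * (1 - β))) := by ring
    _ ≤ -(12 * ε ^ 2 * m / β) := by
      have : 0 < 1 - β := sub_pos.2 hβ1
      gcongr
      exact mul_le_of_le_one_right hβ0.le (by linarith)
    _ = -(12 * (ε * m) ^ 2 / (β * m)) := by field_simp

theorem sampling_lemma_small_general (n k m r K : ℕ) (ε : ℝ) (hε : 0 ≤ ε)
    (hm : (m : ℝ) ≤ (n : ℝ) / 4)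
    (hβ1 : 4 * ε ≤ (k : ℝ) / n) (hβ2 : (k : ℝ) / n ≤ 1 / 2)
    (hmβ : 8 ≤ (m : ℝ) * ((k : ℝ) / n))
    (hK : (K : ℝ) = ((k : ℝ) / n - ε) * n)
    (hr : (r : ℝ) ≤ (⌈((k : ℝ) / n) * m⌉ : ℤ)) :
    √(π / 320) * exp (-24) * exp (-12 * ε ^ 2 * m / (((k : ℝ) / n) * (1 - (k : ℝ) / n))) ≤
      ∑ j ∈ Icc r m, (K.choose j * (n - K).choose (m - j) : ℝ) / n.choose m := by
  set β : ℝ := k / n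
  have hβ0 : 0 < β := pos_of_mul_pos_right (by linarith) m.cast_nonneg
  have hm0 : (0 : ℝ) < m := pos_of_mul_pos_left (by linarith) hβ0.le
  have hn0 : (0 : ℝ) < n := by linarith
  have hmean : Hypergeometric.mean n K m = β * m - ε * m := by
    rw [Hypergeometric.mean, hK]
    field_simp
  have hεm : 4 * ε * m ≤ β * m := by gcongr
  have hβm : β * m ≤ 1 / 2 * m := by gcongr
  have hKn : K ≤ n := by
    have : (β - ε) * n ≤ n := mul_le_of_le_one_left hn0.le (by linarith)
    exact_mod_cast hK.trans_le this
  have hmn : 4 * m ≤ n := by exact_mod_cast (by linarith : 4 * (m : ℝ) ≤ n)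
  have hr' : r ≤ ⌈β * m⌉₊ := by
    rw [← Int.natCast_ceil_eq_ceil (by positivity)] at hr
    exact_mod_cast hr
  calc √(π / 320) * exp (-24) * exp (-12 * ε ^ 2 * m / (β * (1 - β)))
      ≤ exp (-12) / 24 * exp (-(12 * (β * m - Hypergeometric.mean n K m) ^ 2 / (β * m))) := by
        rw [hmean, sub_sub_cancel]
        gcongr
        · exact sqrt_pi_div_mul_exp_le
        · exact neg_twelve_mul_div_le hβ0 (by linarith) hm0
    _ ≤ ∑ j ∈ Icc r m, Hypergeometric.pmf n K m j :=
        Hypergeometric.exp_neg_sq_div_le_sum_pmf hKn hmn (by linarith) (by linarith)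
          (by linarith [mul_nonneg hε hm0.le]) (by linarith) hr'

/-- Sampling lemma: `A` consists of `m ≤ n/4` elements drawn without replacement,
`β = k/n` with `4ε ≤ β ≤ 1/2`, `mβ ≥ 8`, `k ≥ 200`. The number of small elements in
`A` is `Hypergeometric(n, K, m)` with `K = (β-ε)n`. If `r ≤ ⌈βm⌉` then the
`r`-th smallest element of `A` is small (i.e. at least `r` of the sampled elements
are small) with probability at least `√(π/320)·e⁻²⁴·e^{-12ε²m/(β(1-β))}`. -/
theorem sampling_lemma_small (n k m r K : ℕ) (ε : ℝ) (hε : 0 < ε)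
    (hm : (m:ℝ) ≤ (n:ℝ)/4)
    (hβ1 : 4*ε ≤ (k:ℝ)/n) (hβ2 : (k:ℝ)/n ≤ 1/2)
    (hmβ : 8 ≤ (m:ℝ) * ((k:ℝ)/n))
    (hk : 200 ≤ k)
    (hK : (K:ℝ) = ((k:ℝ)/n - ε) * n)
    (hr0 : 1 ≤ r) (hr : (r:ℝ) ≤ (⌈((k:ℝ)/n) * m⌉ : ℤ)) :
    Real.sqrt (Real.pi / 320) * Real.exp (-24)
      * Real.exp (-12 * ε^2 * m / (((k:ℝ)/n) * (1 - (k:ℝ)/n)))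
    ≤ ∑ j ∈ Finset.Icc r m,
        (K.choose j * (n - K).choose (m - j) : ℝ) / (n.choose m) :=
  sampling_lemma_small_general n k m r K ε hε.le hm hβ1 hβ2 hmβ hK hr
end
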